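/- Fix a real R. Let Q₀ be a probability mass function on 𝒳, and suppose that for every ℓ ≥ 0 the pair (T̆_ℓ,V̆_ℓ) attains the minimum defining E_c^{ML}(R,Q_ℓ) and Q_{ℓ+1}(x) = ∑_y T̆_ℓ(y)V̆_ℓ(x|y). Then the sequence E_c^{ML}(R,Q_ℓ) is non-increasing in ℓ, and there exists a subset Z ⊆ supp(Q₀) such that E_c^{ML}(R,Q_ℓ) converges, as ℓ → ∞, to the minimum of E_c^{ML}(R,Q) over probability mass functions Q with supp(Q) ⊆ Z. -/

import Mathlib

/-!
In terms of the joint law `J = T∘V`, with marginals `Q_J` and `T`, the objective is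
`max (D(J‖Q∘P)) (B(J) + R)`, where `B(J) = ∑ J log (T / P)` does not involve `Q` (`obj_eq`).
Since `D(J‖Q∘P) = D(J‖Q_J∘P) + D(Q_J‖Q)` (`rkl_chain`), replacing `Q` by `Q_J` does not increase
it, so the recursion is an alternating minimization and the values `e ℓ` decrease to some `e*`.

The supports of the `Q_ℓ` decrease; `Z` is their intersection, which equals the support of `Q_ℓ`
for all large `ℓ`, so `e*` is at least the minimum over `Z`. Conversely, let `J` have input marginal
supported in `Z` and value `g < e*`, and let `K` be the minimizer for `Q_ℓ`. On the segment from `K`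
to `J`, convexity of `B` (`bfun_mix`) keeps `B + R` strictly below `e ℓ`, so the divergence term is
at least `e ℓ` along it. The compensation identity (`rkl_mix`) and monotonicity of relative entropy
under marginals (`rkl_margX_le`) turn this, letting the segment parameter tend to `0`, into
`D(Q_J‖Q_{ℓ+1}) + (e ℓ - g) ≤ D(Q_J‖Q_ℓ)` (`step`). The nonnegative numbers `D(Q_J‖Q_ℓ)` would
then drop by at least `e* - g > 0` at every step, which is impossible.
-/

open scoped BigOperators
open Filter Topology

/-- `f` is a probability mass function on a finite alphabet. -/
def IsPMF {α : Type*} [Fintype α] (f : α → ℝ) : Prop :=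
  (∀ a, 0 ≤ f a) ∧ ∑ a, f a = 1

/-- `P` is a discrete memoryless channel from `𝓧` to `𝓨`. -/
def IsChannel {𝓧 𝓨 : Type*} [Fintype 𝓧] [Fintype 𝓨] (P : 𝓧 → 𝓨 → ℝ) : Prop :=
  ∀ x, IsPMF (P x)

/-- `V` is a conditional pmf on `𝓧` given `𝓨`. -/
def IsCondPMF {𝓧 𝓨 : Type*} [Fintype 𝓧] [Fintype 𝓨] (V : 𝓨 → 𝓧 → ℝ) : Prop :=
  ∀ y, IsPMF (V y)

/-- one term `s·log(s/t)` of a KL divergence, with the conventions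
    `0·log(0/t) = 0` and `s·log(s/0) = +∞` for `s > 0`. -/
noncomputable def klTerm (s t : ℝ) : EReal :=
  if s = 0 then 0 else if t = 0 then ⊤ else ((s * Real.log (s / t) : ℝ) : EReal)

/-- `D(T∘V ‖ Q∘P)`. -/
noncomputable def DQP {𝓧 𝓨 : Type*} [Fintype 𝓧] [Fintype 𝓨]
    (T : 𝓨 → ℝ) (V : 𝓨 → 𝓧 → ℝ) (Q : 𝓧 → ℝ) (P : 𝓧 → 𝓨 → ℝ) : EReal :=
  ∑ y, ∑ x, klTerm (T y * V y x) (Q x * P x y)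

/-- `D(T∘V ‖ T×Q)`. -/
noncomputable def DTQ {𝓧 𝓨 : Type*} [Fintype 𝓧] [Fintype 𝓨]
    (T : 𝓨 → ℝ) (V : 𝓨 → 𝓧 → ℝ) (Q : 𝓧 → ℝ) : EReal :=
  ∑ y, ∑ x, klTerm (T y * V y x) (T y * Q x)

/-- Gallager's function `E₀(ρ,Q)` (for `ρ > −1`). -/
noncomputable def E0 {𝓧 𝓨 : Type*} [Fintype 𝓧] [Fintype 𝓨]
    (ρ : ℝ) (Q : 𝓧 → ℝ) (P : 𝓧 → 𝓨 → ℝ) : ℝ :=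
  - Real.log (∑ y, (∑ x, Q x * P x y ^ (1 / (1 + ρ))) ^ (1 + ρ))

/-- The joint distribution `T_ρ∘V_ρ` on `𝓧 × 𝓨` (for `ρ > −1`). -/
noncomputable def Jrho {𝓧 𝓨 : Type*} [Fintype 𝓧] [Fintype 𝓨]
    (ρ : ℝ) (Q : 𝓧 → ℝ) (P : 𝓧 → 𝓨 → ℝ) (x : 𝓧) (y : 𝓨) : ℝ :=
  Q x * P x y ^ (1 / (1 + ρ)) * (∑ a, Q a * P a y ^ (1 / (1 + ρ))) ^ ρ /
    ∑ y', (∑ a, Q a * P a y' ^ (1 / (1 + ρ))) ^ (1 + ρ)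

/-- `max_{x : Q(x) > 0} P(y|x)`. -/
noncomputable def maxP {𝓧 𝓨 : Type*} (Q : 𝓧 → ℝ) (P : 𝓧 → 𝓨 → ℝ) (y : 𝓨) : ℝ :=
  ⨆ x : {x // 0 < Q x}, P x.1 y

/-- `E₀(−1,Q) = −log ∑_y max_{x : Q(x)>0} P(y|x)`. -/
noncomputable def E0m1 {𝓧 𝓨 : Type*} [Fintype 𝓧] [Fintype 𝓨]
    (Q : 𝓧 → ℝ) (P : 𝓧 → 𝓨 → ℝ) : ℝ :=
  - Real.log (∑ y, maxP Q P y)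

/-- `E₀(ρ,Q)` extended to `ρ = −1`. -/
noncomputable def E0full {𝓧 𝓨 : Type*} [Fintype 𝓧] [Fintype 𝓨]
    (ρ : ℝ) (Q : 𝓧 → ℝ) (P : 𝓧 → 𝓨 → ℝ) : ℝ :=
  if ρ = -1 then E0m1 Q P else E0 ρ Q P

/-- `T_{−1}(y) ∝ max_{a : Q(a)>0} P(y|a)`. -/
noncomputable def Tm1 {𝓧 𝓨 : Type*} [Fintype 𝓧] [Fintype 𝓨]
    (Q : 𝓧 → ℝ) (P : 𝓧 → 𝓨 → ℝ) (y : 𝓨) : ℝ :=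
  maxP Q P y / ∑ y', maxP Q P y'

/-- `V` is admissible at `ρ = −1`: `V(x|y) = 0` for every `x` outside
    `argmax_{a : Q(a)>0} P(y|a)`. -/
def AdmissibleAtM1 {𝓧 𝓨 : Type*} [Fintype 𝓧] [Fintype 𝓨]
    (Q : 𝓧 → ℝ) (P : 𝓧 → 𝓨 → ℝ) (V : 𝓨 → 𝓧 → ℝ) : Prop :=
  ∀ y x, ¬ (0 < Q x ∧ ∀ a, 0 < Q a → P a y ≤ P x y) → V y x = 0

/-- the error exponent `E_e(R,Q)`. -/
noncomputable def Ee {𝓧 𝓨 : Type*} [Fintype 𝓧] [Fintype 𝓨]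
    (R : ℝ) (Q : 𝓧 → ℝ) (P : 𝓧 → 𝓨 → ℝ) : EReal :=
  sInf {v | ∃ T : 𝓨 → ℝ, ∃ V : 𝓨 → 𝓧 → ℝ, IsPMF T ∧ IsCondPMF V ∧
    v = DQP T V Q P + max (DTQ T V Q - (R : EReal)) 0}

/-- the ML correct-decoding exponent `E_c^{ML}(R,Q)`. -/
noncomputable def EcML {𝓧 𝓨 : Type*} [Fintype 𝓧] [Fintype 𝓨]
    (R : ℝ) (Q : 𝓧 → ℝ) (P : 𝓧 → 𝓨 → ℝ) : EReal :=
  sInf {v | ∃ T : 𝓨 → ℝ, ∃ V : 𝓨 → 𝓧 → ℝ, IsPMF T ∧ IsCondPMF V ∧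
    v = DQP T V Q P + max ((R : EReal) - DTQ T V Q) 0}

/-- the strict correct-decoding exponent `E_c(R,Q)` (`+∞` if infeasible). -/
noncomputable def Ec {𝓧 𝓨 : Type*} [Fintype 𝓧] [Fintype 𝓨]
    (R : ℝ) (Q : 𝓧 → ℝ) (P : 𝓧 → 𝓨 → ℝ) : EReal :=
  sInf {v | ∃ T : 𝓨 → ℝ, ∃ V : 𝓨 → 𝓧 → ℝ, IsPMF T ∧ IsCondPMF V ∧
    (R : EReal) ≤ DTQ T V Q ∧ v = DQP T V Q P}

/-- the mutual information `I(Q∘P)`. -/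
noncomputable def MI {𝓧 𝓨 : Type*} [Fintype 𝓧] [Fintype 𝓨]
    (Q : 𝓧 → ℝ) (P : 𝓧 → 𝓨 → ℝ) : ℝ :=
  ∑ x, ∑ y, if Q x * P x y = 0 then 0
    else Q x * P x y * Real.log (P x y / ∑ a, Q a * P a y)

/-- the capacity `C(Z)` of the channel restricted to input letters in `Z`. -/
noncomputable def capacity {𝓧 𝓨 : Type*} [Fintype 𝓧] [Fintype 𝓨]
    (P : 𝓧 → 𝓨 → ℝ) (Z : Set 𝓧) : ℝ :=
  sSup {c | ∃ Q' : 𝓧 → ℝ, IsPMF Q' ∧ (∀ x, 0 < Q' x → x ∈ Z) ∧ c = MI Q' P}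

/-- `R_{−1}^{−}(Q)`. -/
noncomputable def Rm1minus {𝓧 𝓨 : Type*} [Fintype 𝓧] [Fintype 𝓨]
    (Q : 𝓧 → ℝ) (P : 𝓧 → 𝓨 → ℝ) : EReal :=
  sInf {v | ∃ V : 𝓨 → 𝓧 → ℝ, IsCondPMF V ∧ AdmissibleAtM1 Q P V ∧
    v = DTQ (Tm1 Q P) V Q}

/-- `R_{−1}^{+}(Q)`. -/
noncomputable def Rm1plus {𝓧 𝓨 : Type*} [Fintype 𝓧] [Fintype 𝓨]
    (Q : 𝓧 → ℝ) (P : 𝓧 → 𝓨 → ℝ) : EReal :=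
  sSup {v | ∃ V : 𝓨 → 𝓧 → ℝ, IsCondPMF V ∧ AdmissibleAtM1 Q P V ∧
    v = DTQ (Tm1 Q P) V Q}

/-- `F_ρ(T∘V, Q) = D(T∘V‖Q∘P) + ρ·D(T∘V‖T×Q)`. -/
noncomputable def Frho {𝓧 𝓨 : Type*} [Fintype 𝓧] [Fintype 𝓨]
    (ρ : ℝ) (T : 𝓨 → ℝ) (V : 𝓨 → 𝓧 → ℝ) (Q : 𝓧 → ℝ) (P : 𝓧 → 𝓨 → ℝ) : EReal :=
  DQP T V Q P + (ρ : EReal) * DTQ T V Q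

/-- the unconstrained penalized minimum
    `min_{T,V} { D(T∘V‖Q∘P) + ρ·(D(T∘V‖T×Q) − R) }`. -/
noncomputable def penMin {𝓧 𝓨 : Type*} [Fintype 𝓧] [Fintype 𝓨]
    (Q : 𝓧 → ℝ) (P : 𝓧 → 𝓨 → ℝ) (R ρ : ℝ) : EReal :=
  sInf {v | ∃ T : 𝓨 → ℝ, ∃ V : 𝓨 → 𝓧 → ℝ, IsPMF T ∧ IsCondPMF V ∧
    v = DQP T V Q P + (ρ : EReal) * (DTQ T V Q - (R : EReal))}

/-- the support-constrained penalized minimum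
    `min_{T,V : supp(V) ⊆ supp(Q)} { D(T∘V‖Q∘P) − ρ·(R − D(T∘V‖T×Q)) }`. -/
noncomputable def penMinS {𝓧 𝓨 : Type*} [Fintype 𝓧] [Fintype 𝓨]
    (Q : 𝓧 → ℝ) (P : 𝓧 → 𝓨 → ℝ) (R ρ : ℝ) : EReal :=
  sInf {v | ∃ T : 𝓨 → ℝ, ∃ V : 𝓨 → 𝓧 → ℝ, IsPMF T ∧ IsCondPMF V ∧
    (∀ y x, Q x = 0 → V y x = 0) ∧
    v = DQP T V Q P - (ρ : EReal) * ((R : EReal) - DTQ T V Q)}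

/-- The relative entropy `∑ p log (p / q)` as a real number; it agrees with the extended-real one
only when `p` is absolutely continuous with respect to `q`. -/
noncomputable def rkl {ι : Type*} [Fintype ι] (p q : ι → ℝ) : ℝ :=
  ∑ i, p i * Real.log (p i / q i)

/-- The input marginal of a joint law on `𝓨 × 𝓧`. -/
def margX {𝓧 𝓨 : Type*} [Fintype 𝓨] (J : 𝓨 × 𝓧 → ℝ) (x : 𝓧) : ℝ := ∑ y, J (y, x)

/-- The output marginal of a joint law on `𝓨 × 𝓧`. -/
def margY {𝓧 𝓨 : Type*} [Fintype 𝓧] (J : 𝓨 × 𝓧 → ℝ) (y : 𝓨) : ℝ := ∑ x, J (y, x)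

/-- The joint law `Q ∘ P`. -/
def jointQP {𝓧 𝓨 : Type*} (Q : 𝓧 → ℝ) (P : 𝓧 → 𝓨 → ℝ) (z : 𝓨 × 𝓧) : ℝ := Q z.2 * P z.2 z.1

/-- `∑ J log (T / P)`, where `T` is the output marginal of `J`: the difference
`D(J‖Q∘P) − D(J‖T×Q)`, which does not involve `Q`. -/
noncomputable def bfun {𝓧 𝓨 : Type*} [Fintype 𝓧] [Fintype 𝓨] (P : 𝓧 → 𝓨 → ℝ)
    (J : 𝓨 × 𝓧 → ℝ) : ℝ :=
  ∑ z, J z * Real.log (margY J z.1 / P z.2 z.1)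

/-- The objective defining `E_c^{ML}(R,Q)`, as a function of the joint law. -/
noncomputable def robj {𝓧 𝓨 : Type*} [Fintype 𝓧] [Fintype 𝓨] (P : 𝓧 → 𝓨 → ℝ) (R : ℝ)
    (J : 𝓨 × 𝓧 → ℝ) (Q : 𝓧 → ℝ) : ℝ :=
  max (rkl J (jointQP Q P)) (bfun P J + R)

/-! ### Relative entropy on finite sets -/

/-- The log-sum (Gibbs) inequality for measures that need not be normalized. -/
lemma rkl_ge {ι : Type*} [Fintype ι] {p q : ι → ℝ} (hp : ∀ i, 0 ≤ p i) (hq : ∀ i, 0 ≤ q i)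
    (hac : ∀ i, q i = 0 → p i = 0) : ∑ i, p i - ∑ i, q i ≤ rkl p q := by
  rw [rkl, ← Finset.sum_sub_distrib]
  refine Finset.sum_le_sum fun i _ => ?_
  rcases (hp i).eq_or_lt with h | h
  · simp [← h, hq i]
  · have hq' : 0 < q i := (hq i).lt_of_ne fun h0 => h.ne' (hac i h0.symm)
    have h1 := Real.log_le_sub_one_of_pos (div_pos hq' h)
    have h2 : Real.log (p i / q i) = -Real.log (q i / p i) := by
      rw [← Real.log_inv, inv_div]
    have h3 : p i * (q i / p i) = q i := by field_simp
    rw [h2]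
    nlinarith

lemma mul_log_split {j a b c : ℝ} (ha : j ≠ 0 → a ≠ 0) (hb : j ≠ 0 → b ≠ 0)
    (hc : j ≠ 0 → c ≠ 0) :
    j * Real.log (a / b) = j * Real.log (a / c) + j * Real.log (c / b) := by
  by_cases h : j = 0
  · simp [h]
  · rw [Real.log_div (ha h) (hb h), Real.log_div (ha h) (hc h), Real.log_div (hc h) (hb h)]
    ring

/-- The compensation identity for a mixture, with the nonnegative divergence of the second
component dropped. -/
lemma rkl_mix {ι : Type*} [Fintype ι] {p r w : ι → ℝ} (hp : IsPMF p) (hr : IsPMF r)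
    (hpw : ∀ i, w i = 0 → p i = 0) (hrw : ∀ i, w i = 0 → r i = 0) {t : ℝ} (ht0 : 0 < t)
    (ht1 : t < 1) :
    rkl (fun i => (1 - t) * r i + t * p i) w + t * rkl p (fun i => (1 - t) * r i + t * p i)
      ≤ (1 - t) * rkl r w + t * rkl p w := by
  have hs : 0 < 1 - t := by linarith
  set m : ι → ℝ := fun i => (1 - t) * r i + t * p i with hm
  have hm0 : ∀ i, 0 ≤ m i := fun i =>
    add_nonneg (mul_nonneg hs.le (hr.1 i)) (mul_nonneg ht0.le (hp.1 i))
  have hmr : ∀ i, m i = 0 → r i = 0 := fun i h => by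
    have h1 := mul_nonneg hs.le (hr.1 i)
    have h2 := mul_nonneg ht0.le (hp.1 i)
    have h3 : (1 - t) * r i = 0 := by simp only [hm] at h; linarith
    exact (mul_eq_zero.1 h3).resolve_left hs.ne'
  have hmp : ∀ i, m i = 0 → p i = 0 := fun i h => by
    have h1 := mul_nonneg hs.le (hr.1 i)
    have h2 := mul_nonneg ht0.le (hp.1 i)
    have h3 : t * p i = 0 := by simp only [hm] at h; linarith
    exact (mul_eq_zero.1 h3).resolve_left ht0.ne'
  have hmsum : ∑ i, m i = 1 := by
    simp only [hm, Finset.sum_add_distrib, ← Finset.mul_sum, hp.2, hr.2]; ring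
  have hnn : 0 ≤ rkl r m := by
    have := rkl_ge hr.1 hm0 hmr
    rw [hr.2, hmsum] at this; linarith
  have key : (1 - t) * rkl r w + t * rkl p w
      = rkl m w + t * rkl p m + (1 - t) * rkl r m := by
    simp only [rkl, Finset.mul_sum, ← Finset.sum_add_distrib]
    refine Finset.sum_congr rfl fun i _ => ?_
    rw [mul_log_split (j := r i) (c := m i) (fun h => h) (fun h h' => h (hrw i h'))
        (fun h h' => h (hmr i h')),
      mul_log_split (j := p i) (c := m i) (fun h => h) (fun h h' => h (hpw i h'))
        (fun h h' => h (hmp i h'))]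
    have : m i * Real.log (m i / w i) = (1 - t) * r i * Real.log (m i / w i)
        + t * p i * Real.log (m i / w i) := by simp only [hm]; ring
    rw [this]; ring
  have := mul_nonneg hs.le hnn
  linarith

lemma margX_eq_zero {𝓧 𝓨 : Type*} [Fintype 𝓨] {J : 𝓨 × 𝓧 → ℝ} (hJ : ∀ z, 0 ≤ J z) {z : 𝓨 × 𝓧} (h : margX J z.2 = 0) :
    J z = 0 :=
  (Finset.sum_eq_zero_iff_of_nonneg fun y _ => hJ (y, z.2)).1 h z.1 (Finset.mem_univ _)

lemma margY_eq_zero {𝓧 𝓨 : Type*} [Fintype 𝓧] {J : 𝓨 × 𝓧 → ℝ} (hJ : ∀ z, 0 ≤ J z) {z : 𝓨 × 𝓧} (h : margY J z.1 = 0) :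
    J z = 0 :=
  (Finset.sum_eq_zero_iff_of_nonneg fun x _ => hJ (z.1, x)).1 h z.2 (Finset.mem_univ _)

lemma margY_mix {𝓧 𝓨 : Type*} [Fintype 𝓧] (J K : 𝓨 × 𝓧 → ℝ) (t : ℝ) (y : 𝓨) :
    margY (fun z => (1 - t) * K z + t * J z) y = (1 - t) * margY K y + t * margY J y := by
  simp only [margY, Finset.sum_add_distrib, Finset.mul_sum]

lemma margX_mix {𝓧 𝓨 : Type*} [Fintype 𝓨] (J K : 𝓨 × 𝓧 → ℝ) (t : ℝ) (x : 𝓧) :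
    margX (fun z => (1 - t) * K z + t * J z) x = (1 - t) * margX K x + t * margX J x := by
  simp only [margX, Finset.sum_add_distrib, Finset.mul_sum]

section
variable {𝓧 𝓨 : Type*} [Fintype 𝓧] [Fintype 𝓨]

lemma margX_pmf {J : 𝓨 × 𝓧 → ℝ} (hJ : IsPMF J) : IsPMF (margX J) :=
  ⟨fun x => Finset.sum_nonneg fun y _ => hJ.1 _, by
    rw [← hJ.2, Fintype.sum_prod_type_right]; rfl⟩

lemma margY_pmf {J : 𝓨 × 𝓧 → ℝ} (hJ : IsPMF J) : IsPMF (margY J) :=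
  ⟨fun x => Finset.sum_nonneg fun y _ => hJ.1 _, by
    rw [← hJ.2, Fintype.sum_prod_type]; rfl⟩

lemma sum_mul_margX (J : 𝓨 × 𝓧 → ℝ) (f : 𝓧 → ℝ) :
    ∑ z, J z * f z.2 = ∑ x, margX J x * f x := by
  rw [Fintype.sum_prod_type_right]
  simp [margX, Finset.sum_mul]

lemma sum_mul_margY (J : 𝓨 × 𝓧 → ℝ) (f : 𝓨 → ℝ) :
    ∑ z, J z * f z.1 = ∑ y, margY J y * f y := by
  rw [Fintype.sum_prod_type]
  simp [margY, Finset.sum_mul]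

/-- Chain rule `D(J‖Q∘P) = D(J‖Q_J∘P) + D(Q_J‖Q)`, where `Q_J` is the input marginal of `J`. -/
lemma rkl_chain {J : 𝓨 × 𝓧 → ℝ} (hJ : IsPMF J) {Q : 𝓧 → ℝ} {P : 𝓧 → 𝓨 → ℝ}
    (hac : ∀ z, jointQP Q P z = 0 → J z = 0) :
    rkl J (jointQP Q P) = rkl J (jointQP (margX J) P) + rkl (margX J) Q := by
  have h2 : rkl (margX J) Q = ∑ z, J z * Real.log (margX J z.2 / Q z.2) :=
    (sum_mul_margX J fun x => Real.log (margX J x / Q x)).symm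
  rw [h2, rkl, rkl, ← Finset.sum_add_distrib]
  refine Finset.sum_congr rfl fun z _ => ?_
  by_cases h : J z = 0
  · simp [h]
  have hQP : Q z.2 * P z.2 z.1 ≠ 0 := fun h' => h (hac z h')
  have hm : margX J z.2 ≠ 0 := fun h' => h (margX_eq_zero hJ.1 h')
  have hQ := left_ne_zero_of_mul hQP
  have hP := right_ne_zero_of_mul hQP
  simp only [jointQP]
  rw [Real.log_div h hQP, Real.log_div h (mul_ne_zero hm hP), Real.log_div hm hQ,
    Real.log_mul hQ hP, Real.log_mul hm hP]
  ring

/-- Passing to input marginals does not increase relative entropy. -/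
lemma rkl_margX_le {J K : 𝓨 × 𝓧 → ℝ} (hJ : IsPMF J) (hK : IsPMF K)
    (hac : ∀ z, K z = 0 → J z = 0) : rkl (margX J) (margX K) ≤ rkl J K := by
  set q : 𝓨 × 𝓧 → ℝ := fun z => K z * (margX J z.2 / margX K z.2) with hq
  have hmac : ∀ x, margX K x = 0 → margX J x = 0 := fun x h =>
    Finset.sum_eq_zero fun y _ => hac _ (margX_eq_zero (z := (y, x)) hK.1 h)
  have hq0 : ∀ z, 0 ≤ q z := fun z =>
    mul_nonneg (hK.1 z) (div_nonneg ((margX_pmf hJ).1 _) ((margX_pmf hK).1 _))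
  have hqs : ∑ z, q z = 1 := by
    rw [hq, sum_mul_margX K fun x => margX J x / margX K x, ← (margX_pmf hJ).2]
    refine Finset.sum_congr rfl fun x _ => ?_
    by_cases h : margX K x = 0
    · simp [h, hmac x h]
    · field_simp
  have hqac : ∀ z, q z = 0 → J z = 0 := fun z h => by
    rcases mul_eq_zero.1 h with h | h
    · exact hac z h
    · rcases div_eq_zero_iff.1 h with h | h
      · exact margX_eq_zero hJ.1 h
      · exact hac z (margX_eq_zero hK.1 h)
  have h1 := rkl_ge hJ.1 hq0 hqac
  rw [hJ.2, hqs] at h1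
  have h2 : rkl (margX J) (margX K) = ∑ z, J z * Real.log (margX J z.2 / margX K z.2) :=
    (sum_mul_margX J fun x => Real.log (margX J x / margX K x)).symm
  have h3 : rkl J K = rkl J q + rkl (margX J) (margX K) := by
    rw [h2, rkl, rkl, ← Finset.sum_add_distrib]
    refine Finset.sum_congr rfl fun z _ => ?_
    by_cases h : J z = 0
    · simp [h]
    have hKz : K z ≠ 0 := fun h' => h (hac z h')
    have hr : margX J z.2 / margX K z.2 ≠ 0 := div_ne_zero
      (fun h' => h (margX_eq_zero hJ.1 h')) (fun h' => hKz (margX_eq_zero hK.1 h'))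
    simp only [hq]
    rw [Real.log_div h hKz, Real.log_div h (mul_ne_zero hKz hr), Real.log_mul hKz hr]
    ring
  linarith

lemma bfun_eq {P : 𝓧 → 𝓨 → ℝ} {J : 𝓨 × 𝓧 → ℝ} (hJ : ∀ z, 0 ≤ J z)
    (hac : ∀ z, P z.2 z.1 = 0 → J z = 0) :
    bfun P J = ∑ y, margY J y * Real.log (margY J y) - ∑ z, J z * Real.log (P z.2 z.1) := by
  rw [← sum_mul_margY J fun y => Real.log (margY J y), bfun, ← Finset.sum_sub_distrib]
  refine Finset.sum_congr rfl fun z _ => ?_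
  by_cases h : J z = 0
  · simp [h]
  rw [Real.log_div (fun h' => h (margY_eq_zero hJ h')) (fun h' => h (hac z h'))]
  ring

/-- `J ↦ ∑ J log (T / P)` is convex, being `∑ T log T` plus a linear function of `J`. -/
lemma bfun_mix {P : 𝓧 → 𝓨 → ℝ} {J K : 𝓨 × 𝓧 → ℝ} (hJ : ∀ z, 0 ≤ J z) (hK : ∀ z, 0 ≤ K z)
    (hJP : ∀ z, P z.2 z.1 = 0 → J z = 0) (hKP : ∀ z, P z.2 z.1 = 0 → K z = 0)
    {t : ℝ} (ht0 : 0 ≤ t) (ht1 : t ≤ 1) :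
    bfun P (fun z => (1 - t) * K z + t * J z) ≤ (1 - t) * bfun P K + t * bfun P J := by
  have hs : 0 ≤ 1 - t := by linarith
  rw [bfun_eq hJ hJP, bfun_eq hK hKP, bfun_eq
    (fun z => add_nonneg (mul_nonneg hs (hK z)) (mul_nonneg ht0 (hJ z)))
    (fun z h => by simp [hJP z h, hKP z h])]
  have h1 : ∑ y, margY (fun z => (1 - t) * K z + t * J z) y
        * Real.log (margY (fun z => (1 - t) * K z + t * J z) y)
      ≤ (1 - t) * ∑ y, margY K y * Real.log (margY K y)
        + t * ∑ y, margY J y * Real.log (margY J y) := by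
    simp only [Finset.mul_sum, ← Finset.sum_add_distrib]
    refine Finset.sum_le_sum fun y _ => ?_
    rw [margY_mix]
    have := Real.convexOn_mul_log.2 (x := margY K y) (y := margY J y)
      (Finset.sum_nonneg fun x _ => hK _) (Finset.sum_nonneg fun x _ => hJ _)
      hs ht0 (by ring)
    simpa [smul_eq_mul] using this
  have h2 : ∑ z, ((1 - t) * K z + t * J z) * Real.log (P z.2 z.1)
      = (1 - t) * ∑ z, K z * Real.log (P z.2 z.1) + t * ∑ z, J z * Real.log (P z.2 z.1) := by
    simp only [Finset.mul_sum, ← Finset.sum_add_distrib]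
    exact Finset.sum_congr rfl fun z _ => by ring
  linarith

/-! ### The objective as a real function of the joint law -/

lemma klTerm_eq {s t : ℝ} (h : t = 0 → s = 0) :
    klTerm s t = ((s * Real.log (s / t) : ℝ) : EReal) := by
  unfold klTerm
  by_cases hs : s = 0
  · simp [hs]
  · rw [if_neg hs, if_neg fun h' => hs (h h')]

lemma klTerm_ne_bot (s t : ℝ) : klTerm s t ≠ ⊥ := by
  unfold klTerm
  split_ifs <;> simp [-EReal.coe_mul]

lemma ereal_sum_ne_bot {ι : Type*} (s : Finset ι) (f : ι → EReal) (hf : ∀ i, f i ≠ ⊥) :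
    ∑ i ∈ s, f i ≠ ⊥ := by
  classical
  induction s using Finset.induction_on with
  | empty => simp
  | insert a s ha ih =>
    rw [Finset.sum_insert ha]
    exact EReal.add_ne_bot_iff.2 ⟨hf a, ih⟩

lemma ereal_sum_top {ι : Type*} [Fintype ι] (f : ι → EReal) (hf : ∀ i, f i ≠ ⊥) {i : ι}
    (hi : f i = ⊤) : ∑ i, f i = ⊤ := by
  classical
  rw [← Finset.add_sum_erase _ _ (Finset.mem_univ i), hi]
  exact EReal.top_add_of_ne_bot (ereal_sum_ne_bot _ _ hf)

lemma ereal_coe_sum {ι : Type*} (s : Finset ι) (f : ι → ℝ) :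
    ((∑ i ∈ s, f i : ℝ) : EReal) = ∑ i ∈ s, (f i : EReal) := by
  classical
  induction s using Finset.induction_on with
  | empty => simp
  | insert a s ha ih => rw [Finset.sum_insert ha, Finset.sum_insert ha, EReal.coe_add, ih]

/-- The joint law `T ∘ V`. -/
def jointTV (T : 𝓨 → ℝ) (V : 𝓨 → 𝓧 → ℝ) (z : 𝓨 × 𝓧) : ℝ := T z.1 * V z.1 z.2

lemma margY_jointTV {T : 𝓨 → ℝ} {V : 𝓨 → 𝓧 → ℝ} (hV : IsCondPMF V) :
    margY (jointTV T V) = T := by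
  funext y
  simp [margY, jointTV, ← Finset.mul_sum, (hV y).2]

lemma jointTV_pmf {T : 𝓨 → ℝ} {V : 𝓨 → 𝓧 → ℝ} (hT : IsPMF T) (hV : IsCondPMF V) :
    IsPMF (jointTV T V) :=
  ⟨fun z => mul_nonneg (hT.1 _) ((hV _).1 _), by
    rw [Fintype.sum_prod_type, ← hT.2]
    exact Finset.sum_congr rfl fun y _ => congrFun (margY_jointTV hV) y⟩

lemma jointQP_pmf {P : 𝓧 → 𝓨 → ℝ} (hP : IsChannel P) {Q : 𝓧 → ℝ} (hQ : IsPMF Q) :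
    IsPMF (jointQP Q P) :=
  ⟨fun z => mul_nonneg (hQ.1 _) ((hP _).1 _), by
    rw [Fintype.sum_prod_type_right, ← hQ.2]
    exact Finset.sum_congr rfl fun x _ => by simp [jointQP, ← Finset.mul_sum, (hP x).2]⟩

/-- Every joint law factors as `T ∘ V`; where the output marginal vanishes, `V` may be any pmf. -/
lemma exists_jointTV [Nonempty 𝓧] {J : 𝓨 × 𝓧 → ℝ} (hJ : IsPMF J) :
    ∃ T : 𝓨 → ℝ, ∃ V : 𝓨 → 𝓧 → ℝ, IsPMF T ∧ IsCondPMF V ∧ jointTV T V = J := by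
  classical
  obtain ⟨x₀⟩ := ‹Nonempty 𝓧›
  refine ⟨margY J, fun y x => if margY J y = 0 then (if x = x₀ then 1 else 0)
    else J (y, x) / margY J y, margY_pmf hJ, fun y => ?_, ?_⟩
  · by_cases h : margY J y = 0
    · simp only [h, if_true]
      exact ⟨fun x => by dsimp only; split_ifs <;> norm_num, by simp⟩
    · simp only [h, if_false]
      refine ⟨fun x => div_nonneg (hJ.1 _) ((margY_pmf hJ).1 _), ?_⟩
      rw [← Finset.sum_div]
      exact div_self h
  · funext z
    simp only [jointTV]
    by_cases h : margY J z.1 = 0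
    · simp [h, margY_eq_zero hJ.1 h]
    · simp only [h, if_false]
      field_simp

lemma obj_eq {P : 𝓧 → 𝓨 → ℝ} {R : ℝ} {Q : 𝓧 → ℝ} {T : 𝓨 → ℝ} {V : 𝓨 → 𝓧 → ℝ}
    (hT : IsPMF T) (hV : IsCondPMF V) (hac : ∀ z, jointQP Q P z = 0 → jointTV T V z = 0) :
    DQP T V Q P + max ((R : EReal) - DTQ T V Q) 0
      = ((robj P R (jointTV T V) Q : ℝ) : EReal) := by
  have hJ := jointTV_pmf hT hV
  have h1 : DQP T V Q P = ((rkl (jointTV T V) (jointQP Q P) : ℝ) : EReal) := by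
    rw [rkl, ereal_coe_sum, Fintype.sum_prod_type]
    exact Finset.sum_congr rfl fun y _ => Finset.sum_congr rfl fun x _ =>
      klTerm_eq fun h => hac (y, x) h
  have h2 : DTQ T V Q = ((rkl (jointTV T V) (fun z => T z.1 * Q z.2) : ℝ) : EReal) := by
    rw [rkl, ereal_coe_sum, Fintype.sum_prod_type]
    refine Finset.sum_congr rfl fun y _ => Finset.sum_congr rfl fun x _ =>
      klTerm_eq fun h => ?_
    rcases mul_eq_zero.1 h with h | h
    · simp [h]
    · exact hac (y, x) (by simp [jointQP, h])
  have h3 : bfun P (jointTV T V) = rkl (jointTV T V) (jointQP Q P)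
      - rkl (jointTV T V) (fun z => T z.1 * Q z.2) := by
    rw [bfun, margY_jointTV hV, rkl, rkl, ← Finset.sum_sub_distrib]
    refine Finset.sum_congr rfl fun z _ => ?_
    by_cases h : jointTV T V z = 0
    · simp [h]
    have hQP : Q z.2 * P z.2 z.1 ≠ 0 := fun h' => h (hac z h')
    have hQ := left_ne_zero_of_mul hQP
    have hP := right_ne_zero_of_mul hQP
    have hTz : T z.1 ≠ 0 := left_ne_zero_of_mul h
    simp only [jointQP]
    rw [Real.log_div hTz hP, Real.log_div h hQP, Real.log_div h (mul_ne_zero hTz hQ),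
      Real.log_mul hQ hP, Real.log_mul hTz hQ]
    ring
  rw [h1, h2, robj, h3, ← EReal.coe_sub, ← EReal.coe_zero, ← EReal.coe_strictMono.monotone.map_max,
    ← EReal.coe_add,
    EReal.coe_eq_coe_iff, ← max_add_add_left, add_zero, max_comm]
  congr 1
  ring

lemma obj_top {P : 𝓧 → 𝓨 → ℝ} {R : ℝ} {Q : 𝓧 → ℝ} {T : 𝓨 → ℝ} {V : 𝓨 → 𝓧 → ℝ}
    (hac : ¬ ∀ z, jointQP Q P z = 0 → jointTV T V z = 0) :
    DQP T V Q P + max ((R : EReal) - DTQ T V Q) 0 = ⊤ := by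
  push Not at hac
  obtain ⟨⟨y, x⟩, h0, h1⟩ := hac
  have h2 : DQP T V Q P = ⊤ := by
    refine ereal_sum_top _ (fun y => ereal_sum_ne_bot _ _ fun x => klTerm_ne_bot _ _) (i := y) ?_
    refine ereal_sum_top _ (fun x => klTerm_ne_bot _ _) (i := x) ?_
    simp only [jointQP] at h0
    simp only [jointTV] at h1
    rw [klTerm, if_neg h1, if_pos h0]
  rw [h2]
  exact EReal.top_add_of_ne_bot fun h => by
    have := le_max_right ((R : EReal) - DTQ T V Q) 0
    rw [h] at this
    simp at this

lemma EcML_le [Nonempty 𝓧] {P : 𝓧 → 𝓨 → ℝ} {R : ℝ} {Q : 𝓧 → ℝ} {J : 𝓨 × 𝓧 → ℝ}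
    (hJ : IsPMF J) (hac : ∀ z, jointQP Q P z = 0 → J z = 0) :
    EcML R Q P ≤ ((robj P R J Q : ℝ) : EReal) := by
  obtain ⟨T, V, hT, hV, rfl⟩ := exists_jointTV hJ
  exact sInf_le ⟨T, V, hT, hV, (obj_eq hT hV hac).symm⟩

/-! ### The alternating minimization -/

lemma robj_margX_le {P : 𝓧 → 𝓨 → ℝ} {R : ℝ} {Q : 𝓧 → ℝ} {J : 𝓨 × 𝓧 → ℝ}
    (hJ : IsPMF J) (hQ : IsPMF Q) (hac : ∀ z, jointQP Q P z = 0 → J z = 0) :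
    robj P R J (margX J) ≤ robj P R J Q := by
  have hmac : ∀ x, Q x = 0 → margX J x = 0 := fun x h =>
    Finset.sum_eq_zero fun y _ => hac _ (by simp [jointQP, h])
  have h := rkl_ge (margX_pmf hJ).1 hQ.1 hmac
  rw [(margX_pmf hJ).2, hQ.2] at h
  refine max_le_max ?_ le_rfl
  rw [rkl_chain hJ hac]
  linarith

/-- The one-step estimate. If `K` minimizes the objective for `Q` with value `e`, and `J` has a
value below `e` at its own marginal, then moving from `Q` to the marginal of `K` brings the
input law closer to that of `J`, by at least the gap in value. -/
lemma step {P : 𝓧 → 𝓨 → ℝ} {R e g : ℝ} {Q : 𝓧 → ℝ} {J K : 𝓨 × 𝓧 → ℝ}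
    (hJ : IsPMF J) (hK : IsPMF K)
    (hJQ : ∀ z, jointQP Q P z = 0 → J z = 0) (hKQ : ∀ z, jointQP Q P z = 0 → K z = 0)
    (hJK : ∀ x, margX K x = 0 → margX J x = 0)
    (he : robj P R K Q = e)
    (hmin : ∀ L, IsPMF L → (∀ z, jointQP Q P z = 0 → L z = 0) → e ≤ robj P R L Q)
    (hg : robj P R J (margX J) ≤ g) (hge : g < e) :
    rkl (margX J) (margX K) + (e - g) ≤ rkl (margX J) Q := by
  have hJP : ∀ z : 𝓨 × 𝓧, P z.2 z.1 = 0 → J z = 0 := fun z h => hJQ z (by simp [jointQP, h])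
  have hKP : ∀ z : 𝓨 × 𝓧, P z.2 z.1 = 0 → K z = 0 := fun z h => hKQ z (by simp [jointQP, h])
  have hJa : rkl J (jointQP (margX J) P) ≤ g := (le_max_left _ _).trans hg
  have hJb : bfun P J + R ≤ g := (le_max_right _ _).trans hg
  have hKa : rkl K (jointQP Q P) ≤ e := he ▸ le_max_left _ _
  have hKb : bfun P K + R ≤ e := he ▸ le_max_right _ _
  have hch := rkl_chain hJ hJQ
  have main : ∀ t : ℝ, 0 < t → t < 1 →
      rkl (margX J) (fun x => (1 - t) * margX K x + t * margX J x) ≤ rkl J (jointQP Q P) - e := by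
    intro t ht0 ht1
    have hs : 0 < 1 - t := by linarith
    set L : 𝓨 × 𝓧 → ℝ := fun z => (1 - t) * K z + t * J z with hL
    have hLp : IsPMF L := ⟨fun z => add_nonneg (mul_nonneg hs.le (hK.1 z))
      (mul_nonneg ht0.le (hJ.1 z)), by
        simp only [hL, Finset.sum_add_distrib, ← Finset.mul_sum, hJ.2, hK.2]; ring⟩
    have hLJ : ∀ z, L z = 0 → J z = 0 := fun z h => by
      have h1 := mul_nonneg hs.le (hK.1 z)
      have h2 := mul_nonneg ht0.le (hJ.1 z)
      have h3 : t * J z = 0 := by simp only [hL] at h; linarith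
      exact (mul_eq_zero.1 h3).resolve_left ht0.ne'
    have hLm := hmin L hLp fun z h => by simp [hL, hJQ z h, hKQ z h]
    have hb : bfun P L + R < e := by
      have := bfun_mix hJ.1 hK.1 hJP hKP ht0.le ht1.le
      nlinarith
    -- The second branch of the maximum is strictly below `e`, so the first one is active.
    have ha : e ≤ rkl L (jointQP Q P) := (le_max_iff.1 hLm).resolve_right hb.not_ge
    have hmix := rkl_mix hJ hK hJQ hKQ ht0 ht1
    have hdp := rkl_margX_le hJ hLp hLJ
    have hmx : margX L = fun x => (1 - t) * margX K x + t * margX J x :=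
      funext fun x => margX_mix J K t x
    rw [hmx] at hdp
    refine hdp.trans ?_
    have : t * rkl J L ≤ t * (rkl J (jointQP Q P) - e) := by nlinarith
    exact le_of_mul_le_mul_left this ht0
  have hlim : Tendsto (fun t : ℝ => rkl (margX J) (fun x => (1 - t) * margX K x + t * margX J x))
      (𝓝[>] 0) (𝓝 (rkl (margX J) (margX K))) := by
    refine Tendsto.mono_left ?_ nhdsWithin_le_nhds
    refine tendsto_finsetSum _ fun x _ => ?_
    by_cases h : margX J x = 0
    · simp [h]
    have hKx : margX K x ≠ 0 := fun h' => h (hJK x h')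
    have hc : ContinuousAt (fun t : ℝ => margX J x * Real.log
        (margX J x / ((1 - t) * margX K x + t * margX J x))) 0 := by
      refine continuousAt_const.mul (ContinuousAt.log (ContinuousAt.div continuousAt_const
        (by fun_prop) (by simpa using hKx)) ?_)
      simpa using ⟨h, hKx⟩
    simpa [ContinuousAt] using hc
  have hle := le_of_tendsto hlim (b := rkl J (jointQP Q P) - e) (by
    filter_upwards [Ioo_mem_nhdsGT (show (0 : ℝ) < 1 by norm_num)] with t ht
    exact main t ht.1 ht.2)
  linarith

end

theorem stmt_12 {𝓧 𝓨 : Type*} [Fintype 𝓧] [Fintype 𝓨] [Nonempty 𝓧] [Nonempty 𝓨]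
    (P : 𝓧 → 𝓨 → ℝ) (hP : IsChannel P) (R : ℝ)
    (Qs : ℕ → 𝓧 → ℝ) (Ts : ℕ → 𝓨 → ℝ) (Vs : ℕ → 𝓨 → 𝓧 → ℝ)
    (hQ0 : IsPMF (Qs 0))
    (hTs : ∀ ℓ, IsPMF (Ts ℓ)) (hVs : ∀ ℓ, IsCondPMF (Vs ℓ))
    (hmin : ∀ ℓ, DQP (Ts ℓ) (Vs ℓ) (Qs ℓ) P
      + max ((R : EReal) - DTQ (Ts ℓ) (Vs ℓ) (Qs ℓ)) 0 = EcML R (Qs ℓ) P)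
    (hrec : ∀ ℓ x, Qs (ℓ + 1) x = ∑ y, Ts ℓ y * Vs ℓ y x) :
    Antitone (fun ℓ => EcML R (Qs ℓ) P)
    ∧ ∃ Z : Set 𝓧, Z ⊆ {x | 0 < Qs 0 x} ∧
        Tendsto (fun ℓ => EcML R (Qs ℓ) P) atTop
          (𝓝 (sInf {v | ∃ Q' : 𝓧 → ℝ, IsPMF Q' ∧ (∀ x, 0 < Q' x → x ∈ Z) ∧
            v = EcML R Q' P})) := by
  set J : ℕ → 𝓨 × 𝓧 → ℝ := fun ℓ => jointTV (Ts ℓ) (Vs ℓ) with hJdef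
  have hJ : ∀ ℓ, IsPMF (J ℓ) := fun ℓ => jointTV_pmf (hTs ℓ) (hVs ℓ)
  have hQJ : ∀ ℓ, Qs (ℓ + 1) = margX (J ℓ) := fun ℓ => funext fun x => hrec ℓ x
  have hQ : ∀ ℓ, IsPMF (Qs ℓ) := fun ℓ => by
    cases ℓ with
    | zero => exact hQ0
    | succ n => rw [hQJ]; exact margX_pmf (hJ n)
  -- The law `Q ∘ P` itself has a finite value, so the minimizers are absolutely continuous.
  have hac : ∀ ℓ z, jointQP (Qs ℓ) P z = 0 → J ℓ z = 0 := fun ℓ => by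
    by_contra h
    have h1 := hmin ℓ
    rw [obj_top h] at h1
    have h2 := EcML_le (R := R) (jointQP_pmf hP (hQ ℓ)) (fun z hz => hz)
    rw [← h1] at h2
    exact EReal.coe_ne_top _ (top_le_iff.1 h2)
  set e : ℕ → ℝ := fun ℓ => robj P R (J ℓ) (Qs ℓ) with he
  have hE : ∀ ℓ, EcML R (Qs ℓ) P = (e ℓ : EReal) := fun ℓ => by
    rw [← hmin ℓ]; exact obj_eq (hTs ℓ) (hVs ℓ) (hac ℓ)
  have hopt : ∀ ℓ L, IsPMF L → (∀ z, jointQP (Qs ℓ) P z = 0 → L z = 0) →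
      e ℓ ≤ robj P R L (Qs ℓ) := fun ℓ L hL hLac => by
    have := EcML_le (R := R) hL hLac
    rw [hE] at this
    exact EReal.coe_le_coe_iff.1 this
  have hanti : Antitone e := antitone_nat_of_succ_le fun ℓ => by
    refine (hopt (ℓ + 1) (J ℓ) (hJ ℓ) fun z hz => ?_).trans ?_
    · rcases mul_eq_zero.1 hz with h | h
      · rw [hQJ] at h
        exact margX_eq_zero (hJ ℓ).1 h
      · exact hac ℓ z (by simp [jointQP, h])
    · rw [hQJ]
      exact robj_margX_le (hJ ℓ) (hQ ℓ) (hac ℓ)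
  have hzero : ∀ ℓ x, Qs ℓ x = 0 → Qs (ℓ + 1) x = 0 := fun ℓ x h => by
    rw [hQJ]
    exact Finset.sum_eq_zero fun y _ => hac ℓ _ (by simp [jointQP, h])
  have hzero' : ∀ x m n, m ≤ n → Qs m x = 0 → Qs n x = 0 := fun x m n hmn h => by
    induction hmn with
    | refl => exact h
    | step _ ih => exact hzero _ x ih
  have henn : ∀ ℓ, 0 ≤ e ℓ := fun ℓ => by
    have h := rkl_ge (hJ ℓ).1 (jointQP_pmf hP (hQ ℓ)).1 (hac ℓ)
    rw [(hJ ℓ).2, (jointQP_pmf hP (hQ ℓ)).2, sub_self] at h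
    exact h.trans (le_max_left _ _)
  have hbdd : BddBelow (Set.range e) := ⟨0, by rintro _ ⟨ℓ, rfl⟩; exact henn ℓ⟩
  have htend : Tendsto e atTop (𝓝 (⨅ ℓ, e ℓ)) := tendsto_atTop_ciInf hanti hbdd
  set es := ⨅ ℓ, e ℓ with hes
  have hes_le : ∀ ℓ, es ≤ e ℓ := fun ℓ => ciInf_le hbdd ℓ
  have htendE : Tendsto (fun ℓ => EcML R (Qs ℓ) P) atTop (𝓝 (es : EReal)) := by
    simp only [hE]
    exact (continuous_coe_real_ereal.tendsto es).comp htend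
  refine ⟨fun m n hmn => ?_, {x | ∀ ℓ, 0 < Qs ℓ x}, fun x hx => hx 0, ?_⟩
  · simp only [hE]
    exact EReal.coe_le_coe_iff.2 (hanti hmn)
  convert htendE using 2
  refine le_antisymm ?_ ?_
  · -- The supports decrease and the alphabet is finite, so they are eventually all equal.
    have hev : ∀ᶠ ℓ in atTop, ∀ x, 0 < Qs ℓ x → ∀ m, 0 < Qs m x := by
      refine eventually_all.2 fun x => ?_
      by_cases h : ∃ m, Qs m x = 0
      · obtain ⟨m, hm⟩ := h
        filter_upwards [eventually_ge_atTop m] with ℓ hℓ hpos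
        exact absurd (hzero' x m ℓ hℓ hm) hpos.ne'
      · push Not at h
        exact Eventually.of_forall fun ℓ _ m => ((hQ m).1 x).lt_of_ne (h m).symm
    refine ge_of_tendsto htendE ?_
    filter_upwards [hev] with ℓ hℓ
    exact sInf_le ⟨Qs ℓ, hQ ℓ, hℓ, rfl⟩
  · refine le_sInf ?_
    rintro _ ⟨Q', hQ', hsupp, rfl⟩
    refine le_sInf ?_
    rintro _ ⟨T, V, hT, hV, rfl⟩
    by_cases hTV : ∀ z, jointQP Q' P z = 0 → jointTV T V z = 0
    swap
    · rw [obj_top hTV]; exact le_top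
    rw [obj_eq hT hV hTV, EReal.coe_le_coe_iff]
    by_contra! hlt
    set g := robj P R (jointTV T V) Q' with hg
    have hK := jointTV_pmf hT hV
    have hgm := robj_margX_le (R := R) hK hQ' hTV
    have hmz : ∀ ℓ x, Qs ℓ x = 0 → margX (jointTV T V) x = 0 := fun ℓ x h => by
      have hQx : Q' x = 0 := by
        by_contra hne
        exact (hsupp x ((hQ'.1 x).lt_of_ne (Ne.symm hne)) ℓ).ne' h
      exact Finset.sum_eq_zero fun y _ => hTV _ (by simp [jointQP, hQx])
    have hstep : ∀ ℓ, rkl (margX (jointTV T V)) (Qs (ℓ + 1)) + (es - g)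
        ≤ rkl (margX (jointTV T V)) (Qs ℓ) := fun ℓ => by
      have h := step hK (hJ ℓ) (Q := Qs ℓ) (P := P) (R := R) (e := e ℓ) (g := g)
        (fun z hz => by
          rcases mul_eq_zero.1 hz with h | h
          · exact margX_eq_zero hK.1 (hmz ℓ _ h)
          · exact hTV z (by simp [jointQP, h]))
        (hac ℓ) (fun x hx => hmz (ℓ + 1) x (by rw [hQJ]; exact hx)) rfl (hopt ℓ) hgm
        (hlt.trans_le (hes_le ℓ))
      rw [hQJ]
      linarith [hes_le ℓ]
    have htel : ∀ n : ℕ, rkl (margX (jointTV T V)) (Qs n) + n * (es - g)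
        ≤ rkl (margX (jointTV T V)) (Qs 0) := fun n => by
      induction n with
      | zero => simp
      | succ n ih => push_cast; linarith [hstep n]
    obtain ⟨n, hn⟩ := exists_nat_gt (rkl (margX (jointTV T V)) (Qs 0) / (es - g))
    rw [div_lt_iff₀ (by linarith)] at hn
    have hnn := rkl_ge (margX_pmf hK).1 (hQ n).1 (hmz n)
    rw [(margX_pmf hK).2, (hQ n).2, sub_self] at hnn
    linarith [htel n]
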